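/- arXiv:2308.01110 — 7 statements merged into one kernel-verified Lean document; each statement's English description precedes it below -/
import Mathlib

section
/- Let A be an additive commutative group and B a commutative ring. If f : A → B is a polynomial map of degree ≤ n and g : A → B is a polynomial map of degree ≤ m, then the pointwise product f·g : A → B, (f·g)(x) = f(x)·g(x), is a polynomial map of degree ≤ n + m. -/
/-- The difference operator: `(D_a f)(x) = f (a + x) - f x`. -/
def DOp {A B : Type*} [AddCommGroup A] [AddCommGroup B] (a : A) (f : A → B) : A → B :=
  fun x => f (a + x) - f x

/-- `f : A → B` is a polynomial map of degree `≤ n`. -/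
def IsPolyDeg {A B : Type*} [AddCommGroup A] [AddCommGroup B] : ℕ → (A → B) → Prop
  | 0 => fun f => ∀ a x, DOp a f x = 0
  | n + 1 => fun f => ∀ a, IsPolyDeg n (DOp a f)

theorem isPolyDeg_add_aux {A B : Type*} [AddCommGroup A] [AddCommGroup B] (n : ℕ) :
    ∀ (f g : A → B), IsPolyDeg n f → IsPolyDeg n g → IsPolyDeg n (fun x => f x + g x) := by
  induction n with
  | zero =>
    intro f g hf hg a x
    have h1 := hf a x
    have h2 := hg a x
    simp only [DOp] at *
    rw [add_sub_add_comm, h1, h2, add_zero]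
  | succ n ih =>
    intro f g hf hg a
    have h := ih _ _ (hf a) (hg a)
    have e : DOp a (fun x => f x + g x) = fun x => DOp a f x + DOp a g x := by
      funext x
      simp only [DOp]
      abel
    rw [e]
    exact h

theorem isPolyDeg_shift_aux {A B : Type*} [AddCommGroup A] [AddCommGroup B] (n : ℕ) (c : A) :
    ∀ (f : A → B), IsPolyDeg n f → IsPolyDeg n (fun x => f (c + x)) := by
  induction n with
  | zero =>
    intro f hf a x
    have h1 := hf a (c + x)
    simp only [DOp] at *
    rw [add_left_comm]
    exact h1
  | succ n ih =>
    intro f hf a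
    have h := ih _ (hf a)
    have e : DOp a (fun x => f (c + x)) = fun x => DOp a f (c + x) := by
      funext x
      simp only [DOp]
      rw [add_left_comm]
    rw [e]
    exact h

theorem isPolyDeg_mul_aux {A B : Type*} [AddCommGroup A] [CommRing B] (k : ℕ) :
    ∀ (n m : ℕ) (f g : A → B), n + m = k → IsPolyDeg n f → IsPolyDeg m g →
      IsPolyDeg k (fun x => f x * g x) := by
  induction k with
  | zero =>
    intro n m f g hk hf hg a x
    obtain rfl : n = 0 := by omega
    obtain rfl : m = 0 := by omega
    have h1 := sub_eq_zero.1 (hf a x)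
    have h2 := sub_eq_zero.1 (hg a x)
    simp only [DOp]
    rw [h1, h2, sub_self]
  | succ k ih =>
    intro n m f g hk hf hg a
    have e : DOp a (fun x => f x * g x) =
        fun x => DOp a f x * g (a + x) + f x * DOp a g x := by
      funext x
      simp only [DOp]
      ring
    rw [e]
    rcases n with _ | n
    · obtain rfl : m = k + 1 := by omega
      have e2 : (fun x => DOp a f x * g (a + x) + f x * DOp a g x) =
          fun x => f x * DOp a g x := by
        funext x
        rw [hf a x, zero_mul, zero_add]
      rw [e2]
      exact ih 0 k _ _ (by omega) hf (hg a)
    · have h1 := ih n m _ _ (by omega) (hf a) (isPolyDeg_shift_aux m a g hg)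
      rcases m with _ | m
      · have e2 : (fun x => DOp a f x * g (a + x) + f x * DOp a g x) =
            fun x => DOp a f x * g (a + x) := by
          funext x
          rw [hg a x, mul_zero, add_zero]
        rw [e2]
        exact h1
      · exact isPolyDeg_add_aux k _ _ h1 (ih (n + 1) m _ _ (by omega) hf (hg a))

/-- If `f : A → B` is a polynomial map of degree `≤ n` and `g : A → B` of degree `≤ m`, with
`B` a commutative ring, then the pointwise product `f·g` is a polynomial map of
degree `≤ n + m`. -/
theorem isPolyDeg_mul {A B : Type*} [AddCommGroup A] [CommRing B]
    (n m : ℕ) (f g : A → B) (hf : IsPolyDeg n f) (hg : IsPolyDeg m g) :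
    IsPolyDeg (n + m) (fun x => f x * g x) := by
  exact isPolyDeg_mul_aux _ n m f g rfl hf hg
end

section
/- Let A, B, C be additive commutative groups. If f : A → B is a polynomial map of degree ≤ n and g : B → C is a polynomial map of degree ≤ m, then the composition g ∘ f : A → C is a polynomial map of degree ≤ n·m. -/
section aux

/-- Degree `< n`. -/
def PLT {A B : Type*} [AddCommGroup A] [AddCommGroup B] : ℕ → (A → B) → Prop
  | 0 => fun f => f = 0
  | n + 1 => fun f => ∀ a, PLT n (DOp a f)

theorem isPolyDeg_iff_PLT {A B : Type*} [AddCommGroup A] [AddCommGroup B] (n : ℕ) :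
    ∀ f : A → B, IsPolyDeg n f ↔ PLT (n + 1) f := by
  induction n with
  | zero =>
    intro f
    simp only [IsPolyDeg, PLT, funext_iff, Pi.zero_apply]
  | succ n ih =>
    intro f
    have h1 : IsPolyDeg (n + 1) f ↔ ∀ a, IsPolyDeg n (DOp a f) := Iff.rfl
    have h2 : PLT (n + 1 + 1) f ↔ ∀ a, PLT (n + 1) (DOp a f) := Iff.rfl
    rw [h1, h2]
    exact forall_congr' fun a => ih _

theorem PLT_zero {A B : Type*} [AddCommGroup A] [AddCommGroup B] (n : ℕ) :
    PLT n (0 : A → B) := by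
  induction n with
  | zero => rfl
  | succ n ih =>
    intro a
    have : DOp a (0 : A → B) = 0 := by funext x; simp [DOp]
    rw [this]; exact ih

theorem PLT_add {A B : Type*} [AddCommGroup A] [AddCommGroup B] (n : ℕ) :
    ∀ f g : A → B, PLT n f → PLT n g → PLT n (f + g) := by
  induction n with
  | zero =>
    intro f g hf hg
    have hf' : f = 0 := hf
    have hg' : g = 0 := hg
    subst hf' hg'
    exact add_zero _
  | succ n ih =>
    intro f g hf hg a
    have : DOp a (f + g) = DOp a f + DOp a g := by
      funext x; simp only [DOp, Pi.add_apply]; abel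
    rw [this]; exact ih _ _ (hf a) (hg a)

theorem PLT_succ {A B : Type*} [AddCommGroup A] [AddCommGroup B] (n : ℕ) :
    ∀ f : A → B, PLT n f → PLT (n + 1) f := by
  induction n with
  | zero =>
    intro f hf
    have hf' : f = 0 := hf
    subst hf'
    exact PLT_zero 1
  | succ n ih => intro f hf a; exact ih _ (hf a)

theorem PLT_mono {A B : Type*} [AddCommGroup A] [AddCommGroup B] {n k : ℕ} (h : n ≤ k)
    (f : A → B) (hf : PLT n f) : PLT k f := by
  induction h with
  | refl => exact hf
  | step _ ih => exact PLT_succ _ _ ih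

/-- Shift operator. -/
def shiftOp {B : Type*} (C : Type*) [AddCommGroup B] [AddCommGroup C] (b : B) :
    AddMonoid.End (B → C) where
  toFun g := fun y => g (b + y)
  map_zero' := rfl
  map_add' _ _ := rfl

theorem shiftOp_sub_one {B C : Type*} [AddCommGroup B] [AddCommGroup C] (b : B) (g : B → C) :
    (shiftOp C b - 1) g = DOp b g := rfl

theorem shiftOp_eq {B C : Type*} [AddCommGroup B] [AddCommGroup C] (b : B) (g : B → C) :
    shiftOp C b g = g + DOp b g := by
  funext y
  change g (b + y) = g y + (g (b + y) - g y)
  abel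

theorem shiftOp_add {B C : Type*} [AddCommGroup B] [AddCommGroup C] (b c : B) :
    shiftOp C (b + c) = shiftOp C b * shiftOp C c := by
  ext g y
  change g (b + c + y) = g (c + (b + y))
  congr 1; abel

theorem shiftOp_zero {B C : Type*} [AddCommGroup B] [AddCommGroup C] :
    shiftOp C (0 : B) = 1 := by
  ext g y
  change g (0 + y) = g y
  rw [zero_add]

/-- Operators lowering the degree by `i`. -/
def Lowers {B C : Type*} [AddCommGroup B] [AddCommGroup C] (i : ℕ)
    (T : AddMonoid.End (B → C)) : Prop :=
  ∀ d g, PLT (d + i) g → PLT d (T g)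

/-- Weighted families of operators. -/
inductive Wt {A B C : Type*} [AddCommGroup A] [AddCommGroup B] [AddCommGroup C] (n : ℕ) :
    ℕ → (A → AddMonoid.End (B → C)) → Prop
  | zero (k : ℕ) : Wt n k 0
  | add (k : ℕ) (u v : A → AddMonoid.End (B → C)) : Wt n k u → Wt n k v → Wt n k (u + v)
  | mul (j k : ℕ) (u v : A → AddMonoid.End (B → C)) : Wt n j u → Wt n k v → Wt n (j + k) (u * v)
  | mono (k : ℕ) (u : A → AddMonoid.End (B → C)) : Wt n (k + 1) u → Wt n k u
  | unit (h : A → B) : PLT (n + 1) h → Wt n 0 (fun x => shiftOp C (h x))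
  | gen (e w : ℕ) (h : A → B) : PLT e h → e + w = n + 1 → w ≤ n →
      Wt n w (fun x => shiftOp C (h x) - 1)

theorem Wt_gen' {A B C : Type*} [AddCommGroup A] [AddCommGroup B] [AddCommGroup C] (n : ℕ)
    (e w : ℕ) (h : A → B) (hh : PLT e h) (hw : e + w = n + 1) :
    Wt n w (fun x => shiftOp C (h x) - 1) := by
  rcases Nat.lt_or_ge n w with h1 | h1
  · have he : e = 0 := by omega
    subst he
    have hh' : h = 0 := hh
    subst hh'
    have : (fun x : A => shiftOp C ((0 : A → B) x) - 1) = 0 := by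
      funext x
      simp [shiftOp_zero]
    rw [this]; exact Wt.zero _
  · exact Wt.gen e w h hh hw h1

theorem DOp_shift {A B C : Type*} [AddCommGroup A] [AddCommGroup B] [AddCommGroup C]
    (a : A) (h : A → B) :
    DOp a (fun x => shiftOp C (h x)) =
      (fun x => shiftOp C (h x)) * (fun x => shiftOp C (DOp a h x) - 1) := by
  funext x
  simp only [Pi.mul_apply]
  rw [mul_sub, ← shiftOp_add, mul_one]
  simp [DOp]

theorem Wt_DOp {A B C : Type*} [AddCommGroup A] [AddCommGroup B] [AddCommGroup C] (n : ℕ)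
    (a : A) (k : ℕ) (u : A → AddMonoid.End (B → C)) (hu : Wt n k u) :
    Wt n (k + 1) (DOp a u) := by
  induction hu with
  | zero k =>
    have : DOp a (0 : A → AddMonoid.End (B → C)) = 0 := by funext x; simp [DOp]
    rw [this]; exact Wt.zero _
  | add k u v _ _ ihu ihv =>
    have : DOp a (u + v) = DOp a u + DOp a v := by
      funext x; simp only [DOp, Pi.add_apply]; abel
    rw [this]; exact Wt.add _ _ _ ihu ihv
  | mul j k u v hu hv ihu ihv =>
    have : DOp a (u * v) = DOp a u * v + u * DOp a v + DOp a u * DOp a v := by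
      funext x; simp only [DOp, Pi.add_apply, Pi.mul_apply, mul_sub, sub_mul]; abel
    rw [this]
    refine Wt.add _ _ _ (Wt.add _ _ _ ?_ ?_) ?_
    · have := Wt.mul _ _ _ _ ihu hv
      rwa [show j + 1 + k = j + k + 1 by omega] at this
    · exact Wt.mul j (k + 1) _ _ hu ihv
    · apply Wt.mono
      have := Wt.mul _ _ _ _ ihu ihv
      rwa [show j + 1 + (k + 1) = j + k + 1 + 1 by omega] at this
  | mono k u _ ih => exact Wt.mono _ _ ih
  | unit h hh =>
    rw [DOp_shift]
    exact Wt.mul 0 1 _ _ (Wt.unit h hh) (Wt_gen' n n 1 _ (hh a) rfl)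
  | gen e w h hh hw hwn =>
    have : DOp a (fun x => shiftOp C (h x) - 1) = DOp a (fun x => shiftOp C (h x)) := by
      funext x; simp [DOp]
    rw [this, DOp_shift]
    obtain ⟨e, rfl⟩ : ∃ e', e = e' + 1 := ⟨e - 1, by omega⟩
    have := Wt.mul 0 (w + 1) _ _ (Wt.unit (C := C) (n := n) h (PLT_mono (by omega) _ hh))
      (Wt_gen' n e (w + 1) _ (hh a) (by omega))
    rwa [zero_add] at this

theorem Lowers_mono {B C : Type*} [AddCommGroup B] [AddCommGroup C] {i j : ℕ} (h : i ≤ j)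
    (T : AddMonoid.End (B → C)) (hT : Lowers j T) : Lowers i T := by
  intro d g hg
  exact hT d g (PLT_mono (by omega) _ hg)

theorem Wt_Lowers {A B C : Type*} [AddCommGroup A] [AddCommGroup B] [AddCommGroup C] (n : ℕ)
    (hn : 1 ≤ n) (k : ℕ) (u : A → AddMonoid.End (B → C)) (hu : Wt n k u) :
    ∃ i, k ≤ n * i ∧ ∀ x, Lowers i (u x) := by
  induction hu with
  | zero k => exact ⟨k, Nat.le_mul_of_pos_left _ hn, fun x d g _ => PLT_zero d⟩
  | add k u v _ _ ihu ihv =>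
    obtain ⟨i, hi, hu⟩ := ihu
    obtain ⟨j, hj, hv⟩ := ihv
    refine ⟨min i j, ?_, fun x d g hg => ?_⟩
    · rcases min_choice i j with h | h <;> rw [h] <;> assumption
    · exact PLT_add _ _ _ (Lowers_mono (min_le_left _ _) _ (hu x) d g hg)
        (Lowers_mono (min_le_right _ _) _ (hv x) d g hg)
  | mul j k u v _ _ ihu ihv =>
    obtain ⟨i, hi, hu⟩ := ihu
    obtain ⟨j, hj, hv⟩ := ihv
    refine ⟨i + j, by rw [mul_add]; omega, fun x d g hg => ?_⟩
    exact hu x d _ (hv x (d + i) g (by rwa [add_assoc]))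
  | mono k u _ ih =>
    obtain ⟨i, hi, hu⟩ := ih
    exact ⟨i, by omega, hu⟩
  | unit h hh =>
    refine ⟨0, by simp, fun x d g hg => ?_⟩
    rw [shiftOp_eq]
    exact PLT_add _ _ _ hg (PLT_succ d g hg _)
  | gen e w h hh hw hwn =>
    exact ⟨1, by omega, fun x d g hg => hg _⟩

theorem Wt_final {A B C : Type*} [AddCommGroup A] [AddCommGroup B] [AddCommGroup C] (n m : ℕ)
    (hn : 1 ≤ n) (g : B → C) (hg : PLT (m + 1) g) (r : ℕ) :
    ∀ (k : ℕ) (u : A → AddMonoid.End (B → C)), Wt n k u → n * m + 1 ≤ k + r →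
      PLT r (fun x => u x g 0) := by
  induction r with
  | zero =>
    intro k u hu hk
    obtain ⟨i, hi, hL⟩ := Wt_Lowers n hn k u hu
    have him : m + 1 ≤ i := by
      by_contra hc
      have : n * i ≤ n * m := Nat.mul_le_mul_left n (by omega)
      omega
    funext x
    have h0 : u x g = 0 := hL x 0 g (PLT_mono (by omega) _ hg)
    simp [h0]
  | succ r ih =>
    intro k u hu hk a
    exact ih (k + 1) (DOp a u) (Wt_DOp n a k u hu) (by omega)

end aux

/-- If `f : A → B` is a polynomial map of degree `≤ n` and `g : B → C` of degree `≤ m`, then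
`g ∘ f` is a polynomial map of degree `≤ n * m`. -/
theorem isPolyDeg_comp {A B C : Type*} [AddCommGroup A] [AddCommGroup B] [AddCommGroup C]
    (n m : ℕ) (f : A → B) (g : B → C) (hf : IsPolyDeg n f) (hg : IsPolyDeg m g) :
    IsPolyDeg (n * m) (g ∘ f) := by
  rcases Nat.eq_zero_or_pos n with rfl | hn
  · rw [zero_mul]
    intro a x
    have h : f (a + x) - f x = 0 := hf a x
    simp [DOp, sub_eq_zero.mp h]
  · rw [isPolyDeg_iff_PLT] at *
    have := Wt_final n m hn g hg (n * m + 1) 0 _ (Wt.unit f hf) (by omega)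
    have e : (fun x => shiftOp C (f x) g 0) = g ∘ f := by
      funext x
      change g (f x + 0) = g (f x)
      rw [add_zero]
    rwa [e] at this
end

section
/- Fix r : ℕ and let A := (Fin r → ℤ) with pointwise addition. For every function f : A → ℚ and every d : ℕ, f is a polynomial map of degree ≤ d if and only if there exists a polynomial P ∈ MvPolynomial (Fin r) ℚ with total degree ≤ d such that f(x) = eval (fun i => (x i : ℚ)) P for all x ∈ A; moreover such a polynomial P is unique. In particular, every ℚ-valued polynomial map on a finitely generated free abelian group is given by evaluating a polynomial with rational coefficients in linear coordinate functions, and conversely. -/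
theorem IsPolyDeg.zero_fun {A B : Type*} [AddCommGroup A] [AddCommGroup B] (n : ℕ) :
    IsPolyDeg n (fun _ : A => (0 : B)) := by
  induction n with
  | zero => intro a x; simp [DOp]
  | succ n ih =>
    intro a
    have : DOp a (fun _ : A => (0 : B)) = fun _ => 0 := by funext x; simp [DOp]
    rw [this]; exact ih

theorem IsPolyDeg.mono_succ {A B : Type*} [AddCommGroup A] [AddCommGroup B] (n : ℕ) :
    ∀ f : A → B, IsPolyDeg n f → IsPolyDeg (n + 1) f := by
  induction n with
  | zero =>
    intro f h a
    have : DOp a f = fun _ => 0 := by funext x; exact h a x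
    rw [this]; exact IsPolyDeg.zero_fun 0
  | succ n ih => intro f h a; exact ih _ (h a)

theorem IsPolyDeg.mono {A B : Type*} [AddCommGroup A] [AddCommGroup B] {m n : ℕ} (hmn : m ≤ n)
    {f : A → B} (h : IsPolyDeg m f) : IsPolyDeg n f := by
  induction hmn with
  | refl => exact h
  | step _ ih => exact IsPolyDeg.mono_succ _ _ ih

theorem IsPolyDeg.add {A B : Type*} [AddCommGroup A] [AddCommGroup B] (n : ℕ) :
    ∀ f g : A → B, IsPolyDeg n f → IsPolyDeg n g → IsPolyDeg n (fun x => f x + g x) := by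
  induction n with
  | zero =>
    intro f g hf hg a x
    have h1 := hf a x
    have h2 := hg a x
    simp only [DOp] at *
    rw [add_sub_add_comm, h1, h2, add_zero]
  | succ n ih =>
    intro f g hf hg a
    have : DOp a (fun x => f x + g x) = fun x => DOp a f x + DOp a g x := by
      funext x; simp only [DOp]; abel
    rw [this]; exact ih _ _ (hf a) (hg a)

/-- Precomposition with an affine map. -/
theorem IsPolyDeg.comp {A B : Type*} [AddCommGroup A] [AddCommGroup B] (n : ℕ)
    (φ : A → A) (ψ : A → A) (h : ∀ a x, φ (a + x) = ψ a + φ x) :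
    ∀ f : A → B, IsPolyDeg n f → IsPolyDeg n (fun x => f (φ x)) := by
  induction n with
  | zero =>
    intro f hf a x
    have h1 := hf (ψ a) (φ x)
    simp only [DOp] at *
    rw [h, h1]
  | succ n ih =>
    intro f hf a
    have : DOp a (fun x => f (φ x)) = fun x => DOp (ψ a) f (φ x) := by
      funext x; simp only [DOp, h]
    rw [this]; exact ih _ (hf _)

theorem IsPolyDeg.const_mul {A : Type*} [AddCommGroup A] (n : ℕ) (c : ℚ) :
    ∀ f : A → ℚ, IsPolyDeg n f → IsPolyDeg n (fun x => c * f x) := by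
  induction n with
  | zero =>
    intro f hf a x
    have h1 := hf a x
    simp only [DOp] at *
    rw [← mul_sub, h1, mul_zero]
  | succ n ih =>
    intro f hf a
    have : DOp a (fun x => c * f x) = fun x => c * DOp a f x := by
      funext x; simp only [DOp]; ring
    rw [this]; exact ih _ (hf _)

theorem IsPolyDeg.eq_const {A : Type*} [AddCommGroup A] {f : A → ℚ} (h : IsPolyDeg 0 f) (x : A) :
    f x = f 0 := by
  have := h x 0
  simp only [DOp, add_zero] at this
  linarith

theorem IsPolyDeg.mul {A : Type*} [AddCommGroup A] (N : ℕ) : ∀ (m n : ℕ) (f g : A → ℚ), m + n = N →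
    IsPolyDeg m f → IsPolyDeg n g → IsPolyDeg N (fun x => f x * g x) := by
  induction N with
  | zero =>
    intro m n f g hN hf hg
    obtain rfl : m = 0 := by omega
    obtain rfl : n = 0 := by omega
    have : (fun x => f x * g x) = fun x => f 0 * g x := by funext x; rw [hf.eq_const x]
    rw [this]; exact IsPolyDeg.const_mul _ _ _ hg
  | succ N ih =>
    intro m n f g hN hf hg
    rcases m with _ | m
    · have : (fun x => f x * g x) = fun x => f 0 * g x := by funext x; rw [hf.eq_const x]
      rw [this]
      obtain rfl : n = N + 1 := by omega
      exact IsPolyDeg.const_mul _ _ _ hg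
    rcases n with _ | n
    · have : (fun x => f x * g x) = fun x => g 0 * f x := by
        funext x; rw [hg.eq_const x, mul_comm]
      rw [this]
      obtain rfl : m = N := by omega
      exact IsPolyDeg.const_mul _ _ _ hf
    intro a
    have : DOp a (fun x => f x * g x) = fun x => DOp a f x * g x + f (a + x) * DOp a g x := by
      funext x; simp only [DOp]; ring
    rw [this]
    refine IsPolyDeg.add _ _ _ (ih m (n + 1) _ _ (by omega) (hf a) hg)
      (ih (m + 1) n _ _ (by omega) ?_ (hg a))
    exact IsPolyDeg.comp _ (fun x => a + x) id (fun b x => by simp only [id]; abel) f hf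

theorem IsPolyDeg.const {A : Type*} [AddCommGroup A] (n : ℕ) (c : ℚ) :
    IsPolyDeg n (fun _ : A => c) :=
  IsPolyDeg.mono (Nat.zero_le n) (fun a x => by simp [DOp])

theorem IsPolyDeg.coord {r : ℕ} (i : Fin r) :
    IsPolyDeg 1 (fun x : Fin r → ℤ => (x i : ℚ)) := by
  intro a b x
  simp [DOp]

theorem IsPolyDeg.pow {A : Type*} [AddCommGroup A] {f : A → ℚ} (h : IsPolyDeg 1 f) (k : ℕ) :
    IsPolyDeg k (fun x => f x ^ k) := by
  induction k with
  | zero => simpa using IsPolyDeg.const 0 1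
  | succ k ih =>
    simp only [pow_succ]
    exact IsPolyDeg.mul _ k 1 _ _ rfl ih h

theorem IsPolyDeg.prod {A ι : Type*} [AddCommGroup A] (s : Finset ι) (t : ι → ℕ) (f : ι → A → ℚ)
    (h : ∀ i, IsPolyDeg (t i) (f i)) :
    IsPolyDeg (∑ i ∈ s, t i) (fun x => ∏ i ∈ s, f i x) := by
  classical
  induction s using Finset.induction_on with
  | empty => simpa using IsPolyDeg.const 0 1
  | insert i s hi ih =>
    simp only [Finset.prod_insert hi, Finset.sum_insert hi]
    exact IsPolyDeg.mul _ _ _ _ _ rfl (h i) ih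

theorem IsPolyDeg.sum {A ι : Type*} [AddCommGroup A] (s : Finset ι) (n : ℕ) (f : ι → A → ℚ)
    (h : ∀ i ∈ s, IsPolyDeg n (f i)) :
    IsPolyDeg n (fun x => ∑ i ∈ s, f i x) := by
  classical
  induction s using Finset.induction_on with
  | empty => simpa using IsPolyDeg.const n 0
  | insert i s hi ih =>
    simp only [Finset.sum_insert hi]
    exact IsPolyDeg.add _ _ _ (h i (by simp)) (ih fun j hj => h j (by simp [hj]))

theorem isPolyDeg_eval {r : ℕ} (P : MvPolynomial (Fin r) ℚ) (d : ℕ) (h : P.totalDegree ≤ d) :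
    IsPolyDeg d (fun x : Fin r → ℤ => MvPolynomial.eval (fun i => (x i : ℚ)) P) := by
  simp only [MvPolynomial.eval_eq]
  refine IsPolyDeg.sum _ _ _ fun t ht => IsPolyDeg.const_mul _ _ _ ?_
  exact IsPolyDeg.mono ((MvPolynomial.le_totalDegree ht).trans h)
    (IsPolyDeg.prod t.support t _ fun i => (IsPolyDeg.coord i).pow (t i))

theorem exists_sum_pow (k : ℕ) : ∃ p : Polynomial ℚ, p.natDegree ≤ k + 1 ∧ p.eval 0 = 0 ∧
    ∀ x, p.eval (1 + x) - p.eval x = x ^ k := by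
  refine ⟨Polynomial.C (1 / (k + 1 : ℚ)) *
    (Polynomial.bernoulli (k + 1) - Polynomial.C ((Polynomial.bernoulli (k + 1)).eval 0)),
    ?_, by simp, ?_⟩
  · refine (Polynomial.natDegree_C_mul_le _ _).trans ?_
    rw [Polynomial.natDegree_sub_C, Polynomial.natDegree_le_iff_coeff_eq_zero]
    intro N hN
    rw [Polynomial.coeff_bernoulli, if_neg (by omega)]
  · intro x
    have : (k + 1 : ℚ) ≠ 0 := by positivity
    simp only [Polynomial.eval_mul, Polynomial.eval_C, Polynomial.eval_sub,
      Polynomial.bernoulli_eval_one_add]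
    push_cast
    field_simp
    simp

theorem exists_sum_monomial {r : ℕ} (i : Fin r) (t : Fin r →₀ ℕ) (c : ℚ) :
    ∃ S : MvPolynomial (Fin r) ℚ, S.totalDegree ≤ (t.sum fun _ e => e) + 1 ∧
      (∀ x : Fin r → ℚ, x i = 0 → MvPolynomial.eval x S = 0) ∧
      ∀ x : Fin r → ℚ, MvPolynomial.eval (Function.update x i (1 + x i)) S - MvPolynomial.eval x S
        = MvPolynomial.eval x (MvPolynomial.monomial t c) := by
  obtain ⟨p, hp, hp0, hp1⟩ := exists_sum_pow (t i)
  have hev : ∀ x : Fin r → ℚ, MvPolynomial.eval x (Polynomial.aeval (MvPolynomial.X i) p)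
      = p.eval (x i) := by
    intro x
    rw [← MvPolynomial.coe_aeval_eq_eval, RingHom.coe_coe, ← Polynomial.aeval_algHom_apply]
    simp
  have ht : t.erase i + Finsupp.single i (t i) = t := Finsupp.erase_add_single i t
  have hm : MvPolynomial.monomial t c =
      MvPolynomial.monomial (t.erase i) c * MvPolynomial.X i ^ (t i) := by
    rw [MvPolynomial.X_pow_eq_monomial, MvPolynomial.monomial_mul, ht, mul_one]
  have hs : (t.sum fun _ e => e) = ((t.erase i).sum fun _ e => e) + t i := by
    conv_lhs => rw [← ht]
    rw [Finsupp.sum_add_index' (fun _ => rfl) (fun _ _ _ => rfl), Finsupp.sum_single_index rfl]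
  have hinv : ∀ (x : Fin r → ℚ) y,
      MvPolynomial.eval (Function.update x i y) (MvPolynomial.monomial (t.erase i) c) =
      MvPolynomial.eval x (MvPolynomial.monomial (t.erase i) c) := by
    intro x y
    simp only [MvPolynomial.eval_monomial, Finsupp.prod]
    congr 1
    refine Finset.prod_congr rfl fun j hj => ?_
    have : j ≠ i := by rintro rfl; simp at hj
    rw [Function.update_of_ne this]
  refine ⟨MvPolynomial.monomial (t.erase i) c * Polynomial.aeval (MvPolynomial.X i) p, ?_, ?_, ?_⟩
  · refine (MvPolynomial.totalDegree_mul _ _).trans ?_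
    rw [hs, add_assoc]
    refine add_le_add (MvPolynomial.totalDegree_monomial_le _ _) ?_
    rw [Polynomial.aeval_eq_sum_range]
    refine MvPolynomial.totalDegree_finsetSum_le fun j hj => ?_
    refine (MvPolynomial.totalDegree_smul_le _ _).trans ?_
    rw [MvPolynomial.totalDegree_X_pow]
    simp at hj
    omega
  · intro x hx
    rw [map_mul, hev, hx, hp0, mul_zero]
  · intro x
    rw [map_mul, map_mul, hev, hev, hinv, hm, map_mul, ← mul_sub, Function.update_self, hp1]
    simp

theorem exists_sum_mvPolynomial {r : ℕ} (i : Fin r) (Q : MvPolynomial (Fin r) ℚ) (d : ℕ)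
    (hQ : Q.totalDegree ≤ d) :
    ∃ S : MvPolynomial (Fin r) ℚ, S.totalDegree ≤ d + 1 ∧
      (∀ x : Fin r → ℚ, x i = 0 → MvPolynomial.eval x S = 0) ∧
      ∀ x : Fin r → ℚ, MvPolynomial.eval (Function.update x i (1 + x i)) S - MvPolynomial.eval x S
        = MvPolynomial.eval x Q := by
  choose S h1 h2 h3 using exists_sum_monomial i
  refine ⟨∑ t ∈ Q.support, S t (Q.coeff t), ?_, ?_, ?_⟩
  · refine MvPolynomial.totalDegree_finsetSum_le fun t ht => (h1 _ _).trans ?_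
    have := MvPolynomial.le_totalDegree ht
    omega
  · intro x hx
    rw [map_sum]
    exact Finset.sum_eq_zero fun t _ => h2 _ _ _ hx
  · intro x
    rw [map_sum, map_sum, ← Finset.sum_sub_distrib]
    conv_rhs => rw [MvPolynomial.as_sum Q, map_sum]
    exact Finset.sum_congr rfl fun t _ => h3 _ _ _

theorem exists_of_isPolyDeg (r d : ℕ) : ∀ f : (Fin r → ℤ) → ℚ, IsPolyDeg d f →
    ∃ P : MvPolynomial (Fin r) ℚ,
      P.totalDegree ≤ d ∧ ∀ x : Fin r → ℤ, f x = MvPolynomial.eval (fun i => (x i : ℚ)) P := by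
  induction d with
  | zero =>
    intro f hf
    exact ⟨MvPolynomial.C (f 0), by simp, fun x => by simpa using hf.eq_const x⟩
  | succ d ih =>
    suffices H : ∀ s : Finset (Fin r), ∀ f : (Fin r → ℤ) → ℚ, IsPolyDeg (d + 1) f →
        (∀ x y, (∀ i ∈ s, x i = y i) → f x = f y) → ∃ P : MvPolynomial (Fin r) ℚ,
        P.totalDegree ≤ d + 1 ∧ ∀ x : Fin r → ℤ, f x = MvPolynomial.eval (fun i => (x i : ℚ)) P by
      intro f hf
      exact H Finset.univ f hf fun x y h => by
        rw [show x = y from funext fun i => h i (Finset.mem_univ i)]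
    intro s
    induction s using Finset.induction_on with
    | empty =>
      intro f hf h
      exact ⟨MvPolynomial.C (f 0), by simp, fun x => by simpa using h x 0 (by simp)⟩
    | insert i s hi ihs =>
      intro f hf h
      obtain ⟨G, hG, hGe⟩ := ihs (fun x => f (Function.update x i 0))
        (IsPolyDeg.comp _ (fun x => Function.update x i 0) (fun x => Function.update x i 0)
          (fun a x => by rw [← Function.update_add, add_zero]) f hf)
        (fun x y hxy => h _ _ fun j hj => by
          by_cases hji : j = i
          · subst hji; simp
          · rw [Function.update_of_ne hji, Function.update_of_ne hji]
            exact hxy j (by simpa [hji] using hj))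
      obtain ⟨Q, hQ, hQe⟩ := ih _ (hf (Pi.single i 1))
      obtain ⟨S, hS, hS0, hS1⟩ := exists_sum_mvPolynomial i Q d hQ
      refine ⟨G + S, (MvPolynomial.totalDegree_add _ _).trans (max_le hG hS), fun x => ?_⟩
      rw [map_add, ← hGe]
      have step : ∀ n : ℤ, f (Function.update x i (n + 1)) - f (Function.update x i n) =
          MvPolynomial.eval (fun j => ((Function.update x i (n + 1) : Fin r → ℤ) j : ℚ)) S -
          MvPolynomial.eval (fun j => ((Function.update x i n : Fin r → ℤ) j : ℚ)) S := by
        intro n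
        have e1 := hQe (Function.update x i n)
        rw [← hS1] at e1
        have e2 : Pi.single i 1 + Function.update x i n = Function.update x i (n + 1) := by
          funext j
          by_cases hji : j = i
          · subst hji; simp [add_comm]
          · simp [hji]
        have e3 : Function.update (fun j => ((Function.update x i n : Fin r → ℤ) j : ℚ)) i
            (1 + ((Function.update x i n : Fin r → ℤ) i : ℚ)) =
            (fun j => ((Function.update x i (n + 1) : Fin r → ℤ) j : ℚ)) := by
          funext j
          by_cases hji : j = i
          · subst hji; simp [add_comm]
          · simp [hji]
        rw [e3] at e1
        rw [← e1, DOp, e2]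
      have key : ∀ n : ℤ, f (Function.update x i n) = f (Function.update x i 0) +
          MvPolynomial.eval (fun j => ((Function.update x i n : Fin r → ℤ) j : ℚ)) S := by
        intro n
        induction n using Int.induction_on with
        | zero => rw [hS0 _ (by simp), add_zero]
        | succ n ihn => linarith [step n]
        | pred n ihn =>
          have := step (-(n : ℤ) - 1)
          rw [sub_add_cancel] at this
          linarith
      simpa using key (x i)

/-- A function `f : ℤ^r → ℚ` is a polynomial map of degree `≤ d` iff it is given by
evaluating a (unique) multivariate polynomial over `ℚ` of total degree `≤ d` in
the coordinates. -/
theorem isPolyDeg_iff_mvPolynomial (r : ℕ) (f : (Fin r → ℤ) → ℚ) (d : ℕ) :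
    IsPolyDeg d f ↔ ∃! P : MvPolynomial (Fin r) ℚ,
      P.totalDegree ≤ d ∧ ∀ x : Fin r → ℤ, f x = MvPolynomial.eval (fun i => (x i : ℚ)) P := by
  constructor
  · intro hf
    obtain ⟨P, hP, hPe⟩ := exists_of_isPolyDeg r d f hf
    refine ⟨P, ⟨hP, hPe⟩, ?_⟩
    rintro Q ⟨-, hQe⟩
    refine MvPolynomial.funext_set (fun _ => Set.range (Int.cast : ℤ → ℚ))
      (fun _ => Set.infinite_range_of_injective Int.cast_injective) fun x hx => ?_
    choose y hy using fun i => hx i (Set.mem_univ i)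
    obtain rfl : (fun i => (y i : ℚ)) = x := funext hy
    rw [← hQe, ← hPe]
  · rintro ⟨P, ⟨hP, hPe⟩, -⟩
    rw [show f = fun x => _ from funext hPe]
    exact isPolyDeg_eval P d hP
end

section
/- Let p be a prime and let n, s : ℕ with n ≥ 1. Then in the polynomial ring (ZMod (p^n))[X] one has the identity (X − 1)^{p^{n−1+s}} = (X^{p^s} − 1)^{p^{n−1}}. Equivalently, in ℤ[X] the difference (X − 1)^{p^{n−1+s}} − (X^{p^s} − 1)^{p^{n−1}} has all coefficients divisible by p^n. -/
/-- For a prime `p` and `n ≥ 1`, in `(ℤ/p^n)[X]` one has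
`(X - 1)^(p^(n-1+s)) = (X^(p^s) - 1)^(p^(n-1))`. -/
theorem pow_sub_one_pow_congr (p : ℕ) (hp : p.Prime) (n s : ℕ) (hn : 1 ≤ n) :
    (Polynomial.X - 1 : Polynomial (ZMod (p ^ n))) ^ (p ^ (n - 1 + s)) =
      (Polynomial.X ^ (p ^ s) - 1) ^ (p ^ (n - 1)) := by
  obtain ⟨r, hr⟩ := exists_add_pow_prime_pow_eq hp
    (Polynomial.X - 1 : Polynomial (ZMod (p ^ n))) 1 s
  rw [sub_add_cancel, one_pow] at hr
  have h : (p : Polynomial (ZMod (p ^ n))) ∣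
      (Polynomial.X - 1) ^ p ^ s - (Polynomial.X ^ p ^ s - 1) := by
    rw [hr]
    exact ⟨-((Polynomial.X - 1) * r), by ring⟩
  have h2 := dvd_sub_pow_of_dvd_sub h (n - 1)
  have h0 : (p : Polynomial (ZMod (p ^ n))) ^ n = 0 := by
    have := CharP.cast_eq_zero (Polynomial (ZMod (p ^ n))) (p ^ n)
    exact_mod_cast this
  rw [Nat.sub_add_cancel hn, h0, zero_dvd_iff, sub_eq_zero, ← pow_mul, ← pow_add,
    add_comm s] at h2
  exact h2
end

section
/- Let p be a prime and let n, s : ℕ with n ≥ 1. Then in the polynomial ring (ZMod (p^n))[X] the polynomial (X − 1)^{p^s} divides X^{p^{n+s−1}} − 1. Equivalently, in ℤ[X] the polynomial X^{p^{n+s−1}} − 1 lies in the ideal generated by (X − 1)^{p^s} and the constant p^n. -/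
theorem aux_choose (p : ℕ) (hp : p.Prime) (n s k : ℕ) (hk0 : k ≠ 0) (hk : k < p ^ s) :
    p ^ n ∣ (p ^ (n + s - 1)).choose k := by
  obtain ⟨a, u, hu, rfl⟩ := Nat.exists_eq_pow_mul_and_not_dvd hk0 p hp.ne_one
  have hu0 : 0 < u := Nat.pos_of_ne_zero (by rintro rfl; simp at hu)
  have ha : a < s := by
    refine (Nat.pow_lt_pow_iff_right hp.one_lt).1 (lt_of_le_of_lt ?_ hk)
    exact Nat.le_mul_of_pos_right _ hu0
  have hN : 0 < p ^ (n + s - 1) := pow_pos hp.pos _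
  have h1 := Nat.add_one_mul_choose_eq (p ^ (n + s - 1) - 1) (p ^ a * u - 1)
  have e1 : p ^ (n + s - 1) - 1 + 1 = p ^ (n + s - 1) := by omega
  have e2 : p ^ a * u - 1 + 1 = p ^ a * u := by omega
  rw [e1, e2] at h1
  have h2 : p ^ a * p ^ n ∣ p ^ a * (u * (p ^ (n + s - 1)).choose (p ^ a * u)) := by
    have : p ^ a * p ^ n ∣ p ^ (n + s - 1) := by
      rw [← pow_add]; exact pow_dvd_pow _ (by omega)
    refine this.trans ⟨(p ^ (n + s - 1) - 1).choose (p ^ a * u - 1), ?_⟩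
    rw [h1]; ring
  have h3 := Nat.dvd_of_mul_dvd_mul_left (pow_pos hp.pos a) h2
  exact (Nat.Coprime.pow_left n ((Nat.Prime.coprime_iff_not_dvd hp).2 hu)).dvd_of_dvd_mul_left h3

/-- For a prime `p` and `n ≥ 1`, in `(ℤ/p^n)[X]` the polynomial `(X - 1)^(p^s)` divides
`X^(p^(n+s-1)) - 1`. -/
theorem sub_one_pow_dvd (p : ℕ) (hp : p.Prime) (n s : ℕ) (hn : 1 ≤ n) :
    (Polynomial.X - 1 : Polynomial (ZMod (p ^ n))) ^ (p ^ s) ∣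
      Polynomial.X ^ (p ^ (n + s - 1)) - 1 := by
  have h : (Polynomial.X : Polynomial (ZMod (p ^ n))) ^ (p ^ (n + s - 1)) =
      ((Polynomial.X - 1) + 1) ^ (p ^ (n + s - 1)) := by rw [sub_add_cancel]
  rw [h, add_pow, Finset.sum_range_succ']
  simp only [one_pow, mul_one, pow_zero, Nat.choose_zero_right, Nat.cast_one, add_sub_cancel_right]
  refine Finset.dvd_sum fun k _ => ?_
  by_cases hk : k + 1 < p ^ s
  · have h0 : (((p ^ (n + s - 1)).choose (k + 1) : ℕ) : Polynomial (ZMod (p ^ n))) = 0 :=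
      (CharP.cast_eq_zero_iff _ (p ^ n) _).2 (aux_choose p hp n s _ (by omega) hk)
    rw [h0, mul_zero]
    exact dvd_zero _
  · exact (pow_dvd_pow _ (by omega)).mul_right _
end

section
/- Let p be a prime, let d, N : ℕ with d < p^N, and let f : ℤ → ℤ be a polynomial map of degree ≤ d. Then for every x ∈ ℤ, p divides f(x + p^N) − f(x). In other words, the reduction mod p of any polynomial map ℤ → ℤ of degree < p^N is periodic with period p^N, i.e. factors through ℤ/p^N. -/
theorem DOp_one_eq (f : ℤ → ℤ) : DOp 1 f = fwdDiff 1 f := by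
  funext x
  simp [DOp, fwdDiff, add_comm]

theorem iter_zero_of_polyDeg (d : ℕ) : ∀ (f : ℤ → ℤ), IsPolyDeg d f →
    ∀ n, d < n → (fwdDiff (1 : ℤ))^[n] f = fun _ => 0 := by
  induction d with
  | zero =>
    intro f hf n hn
    obtain ⟨m, rfl⟩ : ∃ m, n = m + 1 := ⟨n - 1, by omega⟩
    have h0 : fwdDiff (1 : ℤ) f = fun _ => 0 := by
      rw [← DOp_one_eq]
      funext x
      exact hf 1 x
    rw [Function.iterate_succ_apply, h0]
    exact Function.iterate_fixed (fwdDiff_const (1 : ℤ) (0 : ℤ)) m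
  | succ d ih =>
    intro f hf n hn
    obtain ⟨m, rfl⟩ : ∃ m, n = m + 1 := ⟨n - 1, by omega⟩
    rw [Function.iterate_succ_apply, ← DOp_one_eq]
    exact ih _ (hf 1) m (by omega)

/-- If `f : ℤ → ℤ` is a polynomial map of degree `≤ d < p^N`, then `f` mod `p` is periodic
with period `p^N`: `p ∣ f (x + p^N) - f x` for all `x`. -/
theorem polyMap_mod_p_periodic (p : ℕ) (hp : p.Prime) (d N : ℕ) (hd : d < p ^ N)
    (f : ℤ → ℤ) (hf : IsPolyDeg d f) :
    ∀ x : ℤ, (p : ℤ) ∣ f (x + (p : ℤ) ^ N) - f x := by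
  intro x
  have h := shift_eq_sum_fwdDiff_iter (1 : ℤ) f (p ^ N) x
  have hx : x + (p ^ N) • (1 : ℤ) = x + (p : ℤ) ^ N := by simp
  rw [hx, Finset.sum_range_succ'] at h
  simp only [Nat.choose_zero_right, one_smul, Function.iterate_zero, id] at h
  rw [h, add_sub_cancel_right]
  refine Finset.dvd_sum fun k _ => ?_
  by_cases hk : k + 1 = p ^ N
  · rw [iter_zero_of_polyDeg d f hf (k + 1) (by omega)]
    simp
  · rw [nsmul_eq_mul]
    exact Dvd.dvd.mul_right (Int.natCast_dvd_natCast.mpr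
      (hp.dvd_choose_pow (Nat.succ_ne_zero k) hk)) _
end

section
/- Let p be a prime and N : ℕ with N ≥ 1. For every function g : ZMod (p^N) → ZMod p there exists a polynomial map f : ℤ → ℤ of degree ≤ p^N − 1 such that for all x ∈ ℤ, the reduction of f(x) modulo p equals g(x mod p^N). In other words, every ZMod p-valued function on ℤ/p^N is realized as the mod-p reduction of an integer-valued polynomial map. -/
theorem choose_shift (a x : ℤ) (k : ℕ) :
    Ring.choose (a + x) k = (∑ i ∈ Finset.range k, Ring.choose x i * Ring.choose a (k - i))
      + Ring.choose x k := by
  rw [add_comm a x, Ring.add_choose_eq k (Commute.all x a),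
    Finset.Nat.sum_antidiagonal_eq_sum_range_succ_mk, Finset.sum_range_succ]
  simp

theorem polyDeg_newton (n : ℕ) : ∀ c : ℕ → ℤ,
    IsPolyDeg n (fun x : ℤ => ∑ k ∈ Finset.range (n + 1), c k * Ring.choose x k) := by
  induction n with
  | zero => intro c a x; simp [DOp]
  | succ n ih =>
    intro c a
    convert ih (fun i => ∑ k ∈ Finset.range (n + 2),
      if i < k then c k * Ring.choose a (k - i) else 0) using 1
    funext x
    simp only [DOp]
    rw [← Finset.sum_sub_distrib]
    simp_rw [Finset.sum_mul]
    rw [Finset.sum_comm]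
    refine Finset.sum_congr rfl fun k hk => ?_
    rw [choose_shift, ← mul_sub, add_sub_cancel_right, Finset.mul_sum]
    have hk' := Finset.mem_range.1 hk
    rw [← Finset.sum_subset (s₁ := Finset.range k) (s₂ := Finset.range (n + 1))]
    · refine Finset.sum_congr rfl fun i hi => ?_
      rw [if_pos (Finset.mem_range.1 hi)]; ring
    · intro i hi
      simp only [Finset.mem_range] at *
      omega
    · intro i _ hi
      rw [if_neg (by simpa using hi), zero_mul]

theorem choose_periodic (p : ℕ) (hp : p.Prime) (N k : ℕ) (hk : k < p ^ N) (x : ℤ) :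
    ((Ring.choose (((p ^ N : ℕ) : ℤ) + x) k : ℤ) : ZMod p) = (Ring.choose x k : ℤ) := by
  rw [choose_shift]
  push_cast
  rw [add_eq_right]
  refine Finset.sum_eq_zero fun i hi => ?_
  have hi' := Finset.mem_range.1 hi
  have h1 : p ∣ (p ^ N).choose (k - i) :=
    hp.dvd_choose_pow (by omega) (by omega)
  have h2 : Ring.choose ((p : ℤ) ^ N) (k - i) = ((p ^ N).choose (k - i) : ℕ) := by
    rw [← Ring.choose_natCast (R := ℤ)]; push_cast; rfl
  rw [h2, Int.cast_natCast, (ZMod.natCast_eq_zero_iff _ _).2 h1, mul_zero]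

/-- Every `ZMod p`-valued function on `ℤ/p^N` is the mod-`p` reduction of an integer-valued
polynomial map `ℤ → ℤ` of degree `≤ p^N - 1`. -/
theorem function_on_zmod_lifts_to_polyMap (p : ℕ) (hp : p.Prime) (N : ℕ) (hN : 1 ≤ N)
    (g : ZMod (p ^ N) → ZMod p) :
    ∃ f : ℤ → ℤ, IsPolyDeg (p ^ N - 1) f ∧
      ∀ x : ℤ, ((f x : ZMod p)) = g (x : ZMod (p ^ N)) := by
  have hpos : 0 < p ^ N := pow_pos hp.pos N
  haveI : NeZero p := ⟨hp.ne_zero⟩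
  let G : ℕ → ℤ := fun n => ((g (n : ZMod (p ^ N))).val : ℤ)
  let c : ℕ → ℤ := fun k => (fwdDiff 1)^[k] G 0
  refine ⟨_, polyDeg_newton (p ^ N - 1) c, ?_⟩
  rw [Nat.sub_add_cancel hpos]
  set f : ℤ → ℤ := fun x => ∑ k ∈ Finset.range (p ^ N), c k * Ring.choose x k with hf
  have hper : Function.Periodic (fun x : ℤ => (f x : ZMod p)) ((p ^ N : ℕ) : ℤ) := by
    intro x
    simp only [hf, Int.cast_sum, Int.cast_mul]
    refine Finset.sum_congr rfl fun k hk => ?_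
    rw [add_comm x, choose_periodic p hp N k (Finset.mem_range.1 hk)]
  have hnat : ∀ n : ℕ, n < p ^ N → f n = G n := by
    intro n hn
    have h := shift_eq_sum_fwdDiff_iter (1 : ℕ) G n 0
    simp only [smul_eq_mul, mul_one, zero_add, nsmul_eq_mul] at h
    rw [h, hf]
    symm
    dsimp only
    refine (Finset.sum_subset (s₂ := Finset.range (p ^ N)) ?_ ?_).trans ?_
    · intro i; simp only [Finset.mem_range]; omega
    · intro i _ hi
      rw [Nat.choose_eq_zero_of_lt (by simp only [Finset.mem_range] at hi; omega)]; simp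
    · refine Finset.sum_congr rfl fun i _ => ?_
      rw [Ring.choose_natCast, mul_comm]
  intro x
  have hpos' : (0 : ℤ) < ((p ^ N : ℕ) : ℤ) := by exact_mod_cast hpos
  obtain ⟨n, hn⟩ := Int.eq_ofNat_of_zero_le (Int.emod_nonneg x hpos'.ne')
  have hlt : n < p ^ N := by
    have := Int.emod_lt_of_pos x hpos'
    rw [hn] at this; exact_mod_cast this
  have hx : x = n + (x / ((p ^ N : ℕ) : ℤ)) * ((p ^ N : ℕ) : ℤ) := by
    rw [← hn]; exact (Int.emod_add_ediv_mul x _).symm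
  have h1 : (f x : ZMod p) = (f n : ZMod p) := by
    have := (hper.int_mul (x / ((p ^ N : ℕ) : ℤ))) n
    exact (congrArg (fun y : ℤ => (f y : ZMod p)) hx).trans this
  have h2 : (x : ZMod (p ^ N)) = (n : ZMod (p ^ N)) := by
    rw [← ZMod.intCast_mod x, hn]; simp
  rw [h1, h2, hnat n hlt]
  simp [G]
end
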